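/- Let d ≥ 3 and consider on ℝ^{d+1} (coordinates (t, x) with x ∈ ℝ^d) the linearized isentropic Euler operator 𝓐 acting on smooth functions z = (ρ, m, M, q) : ℝ^{d+1} → ℝ × ℝ^d × S_0^d × ℝ by 𝓐z = (∂_t m + div M + ∇q, ∂_t ρ + div m), where S_0^d denotes symmetric trace-free d×d matrices. Set Ñ := (1/4)(d−1)²d². Then there exists a linear homogeneous partial differential operator 𝓑 of order two with constant coefficients, mapping smooth functions ℝ^{d+1} → ℝ^{Ñ} to smooth functions ℝ^{d+1} → ℝ × ℝ^d × S_0^d × ℝ, such that the kernel of 𝓐 on C^∞(ℝ^{d+1}) equals the image of 𝓑 on C^∞(ℝ^{d+1}): every smooth z with 𝓐z = 0 is of the form z = 𝓑ψ for some smooth ψ : ℝ^{d+1} → ℝ^{Ñ}, and conversely 𝓐(𝓑ψ) = 0 for every smooth ψ. -/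

import Mathlib

open MeasureTheory Metric Filter Topology

/-- Partial derivative of a scalar function on `ℝ^{d+1}` in the `a`-th coordinate
direction. -/
noncomputable def pdv {n : ℕ} (a : Fin n) (f : EuclideanSpace ℝ (Fin n) → ℝ)
    (x : EuclideanSpace ℝ (Fin n)) : ℝ :=
  fderiv ℝ f x (EuclideanSpace.single a 1)

/-- A scalar second-order homogeneous constant-coefficient operator
`ψ ↦ ∑_{a,b} ∑_s C_{ab}^s ∂_a ∂_b ψ_s` applied to `ψ : ℝ^n → ℝ^{Nt}`. -/
noncomputable def applyOp2 {n Nt : ℕ} (C : Fin n → Fin n → Fin Nt → ℝ)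
    (ψ : EuclideanSpace ℝ (Fin n) → Fin Nt → ℝ) (x : EuclideanSpace ℝ (Fin n)) : ℝ :=
  ∑ a : Fin n, ∑ b : Fin n, ∑ s : Fin Nt,
    C a b s * pdv b (fun y => pdv a (fun z => ψ z s) y) x

/-- The linearized isentropic Euler system `𝓐z = 0` on `ℝ^{d+1}` (coordinates `(x, t)`,
`t` as the last coordinate) for `z = (ρ, m, M, q)`:
`∂_t m + div M + ∇q = 0` and `∂_t ρ + div m = 0`. -/
def EulerLin {d : ℕ} (ρ : EuclideanSpace ℝ (Fin (d + 1)) → ℝ)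
    (m : EuclideanSpace ℝ (Fin (d + 1)) → Fin d → ℝ)
    (M : EuclideanSpace ℝ (Fin (d + 1)) → Fin d → Fin d → ℝ)
    (q : EuclideanSpace ℝ (Fin (d + 1)) → ℝ) : Prop :=
  (∀ x, ∀ j : Fin d,
    pdv (Fin.last d) (fun y => m y j) x +
      (∑ i : Fin d, pdv i.castSucc (fun y => M y j i) x) +
        pdv j.castSucc q x = 0) ∧
  (∀ x, pdv (Fin.last d) ρ x + ∑ i : Fin d, pdv i.castSucc (fun y => m y i) x = 0)

/-- The integral over `[0, 1]` of a jointly smooth family is differentiable in the parameter, and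
the derivative is the integral of the derivative. -/
theorem hasFDerivAt_integral_of_contDiff {E F : Type} [NormedAddCommGroup E] [NormedSpace ℝ E]
    [ProperSpace E] [NormedAddCommGroup F] [NormedSpace ℝ F]
    {g : E × ℝ → F} (hg : ContDiff ℝ (⊤ : ℕ∞) g) (x₀ : E) :
    HasFDerivAt (fun x => ∫ s in (0 : ℝ)..1, g (x, s))
      (∫ s in (0 : ℝ)..1, (fderiv ℝ g (x₀, s)).comp (ContinuousLinearMap.inl ℝ E ℝ)) x₀ := by
  have hcont : Continuous fun p : E × ℝ =>
      (fderiv ℝ g p).comp (ContinuousLinearMap.inl ℝ E ℝ) :=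
    (hg.continuous_fderiv (by simp)).clm_comp continuous_const
  obtain ⟨B, hB⟩ := ((isCompact_closedBall x₀ 1).prod
    (isCompact_Icc (a := (0 : ℝ)) (b := 1))).exists_bound_of_continuousOn hcont.continuousOn
  refine intervalIntegral.hasFDerivAt_integral_of_dominated_of_fderiv_le
    (F := fun x s => g (x, s))
    (F' := fun x s => (fderiv ℝ g (x, s)).comp (ContinuousLinearMap.inl ℝ E ℝ))
    (bound := fun _ => B) (closedBall_mem_nhds x₀ one_pos) ?_ ?_ ?_ ?_ ?_ ?_
  · exact Eventually.of_forall fun x =>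
      (hg.continuous.comp (by fun_prop : Continuous fun s : ℝ => (x, s))).aestronglyMeasurable
  · exact (hg.continuous.comp (by fun_prop : Continuous fun s : ℝ => (x₀, s))).intervalIntegrable
      _ _
  · exact (hcont.comp (by fun_prop : Continuous fun s : ℝ => (x₀, s))).aestronglyMeasurable
  · refine Eventually.of_forall fun s hs x hx => hB (x, s) ⟨hx, ?_⟩
    rw [Set.uIoc_of_le zero_le_one] at hs
    exact ⟨hs.1.le, hs.2⟩
  · exact intervalIntegrable_const
  · refine Eventually.of_forall fun s _ x _ => ?_
    exact ((hg.differentiable (by simp)) (x, s)).hasFDerivAt.comp x (hasFDerivAt_prodMk_left x s)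

/-- The integral over `[0, 1]` of a jointly smooth family is smooth in the parameter. -/
theorem contDiff_integral_of_contDiff {E F : Type} [NormedAddCommGroup E] [NormedSpace ℝ E]
    [ProperSpace E] [NormedAddCommGroup F] [NormedSpace ℝ F]
    {g : E × ℝ → F} (hg : ContDiff ℝ (⊤ : ℕ∞) g) :
    ContDiff ℝ (⊤ : ℕ∞) (fun x => ∫ s in (0 : ℝ)..1, g (x, s)) := by
  rw [contDiff_infty]
  intro n
  induction n generalizing F with
  | zero =>
    exact contDiff_zero.2 (continuous_iff_continuousAt.2 fun x =>
      (hasFDerivAt_integral_of_contDiff hg x).continuousAt)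
  | succ n ih =>
    refine contDiff_succ_iff_hasFDerivAt.2
      ⟨_, ih (g := fun p => (fderiv ℝ g p).comp (ContinuousLinearMap.inl ℝ E ℝ)) ?_,
        fun x => hasFDerivAt_integral_of_contDiff hg x⟩
    exact (hg.fderiv_right (m := ((⊤ : ℕ∞) : WithTop ℕ∞)) (by simp)).clm_comp contDiff_const

theorem contDiff_pdv {n : ℕ} (a : Fin n) {f : EuclideanSpace ℝ (Fin n) → ℝ}
    (hf : ContDiff ℝ (⊤ : ℕ∞) f) : ContDiff ℝ (⊤ : ℕ∞) (pdv a f) :=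
  (hf.fderiv_right (m := ((⊤ : ℕ∞) : WithTop ℕ∞)) (by simp)).clm_apply contDiff_const

theorem pdv_comm {n : ℕ} (a b : Fin n) {f : EuclideanSpace ℝ (Fin n) → ℝ}
    (hf : ContDiff ℝ (⊤ : ℕ∞) f) : pdv a (pdv b f) = pdv b (pdv a f) := by
  have hdiff : Differentiable ℝ (fderiv ℝ f) :=
    (hf.fderiv_right (m := ((⊤ : ℕ∞) : WithTop ℕ∞)) (by simp)).differentiable (by simp)
  have key : ∀ a b : Fin n, ∀ x, pdv a (pdv b f) x =
      fderiv ℝ (fderiv ℝ f) x (EuclideanSpace.single a 1) (EuclideanSpace.single b 1) := by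
    intro a b x
    have := (hdiff x).hasFDerivAt.clm_apply
      (hasFDerivAt_const (EuclideanSpace.single b (1 : ℝ)) x)
    change fderiv ℝ (fun y => fderiv ℝ f y (EuclideanSpace.single b 1)) x _ = _
    rw [this.fderiv]
    simp
  funext x
  rw [key, key]
  exact (hf.contDiffAt.isSymmSndFDerivAt (by
    rw [minSmoothness_of_isRCLikeNormedField]
    exact WithTop.coe_le_coe.2 (le_top : (2 : ℕ∞) ≤ ⊤))) _ _

theorem hasDerivAt_line_pdv {n : ℕ} (a : Fin n) {f : EuclideanSpace ℝ (Fin n) → ℝ}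
    (hf : ContDiff ℝ (⊤ : ℕ∞) f) (x : EuclideanSpace ℝ (Fin n)) (τ : ℝ) :
    HasDerivAt (fun τ : ℝ => f (x + τ • EuclideanSpace.single a 1))
      (pdv a f (x + τ • EuclideanSpace.single a 1)) τ := by
  have hline : HasDerivAt (fun τ : ℝ => x + τ • EuclideanSpace.single a (1 : ℝ))
      (EuclideanSpace.single a 1) τ := by
    simpa using ((hasDerivAt_id τ).smul_const (EuclideanSpace.single a (1 : ℝ))).const_add x
  exact ((hf.differentiable (by simp)) _).hasFDerivAt.comp_hasDerivAt τ hline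

/-- If a function is constant along the lines in direction `a`, its derivative in that direction
vanishes. -/
theorem pdv_eq_zero_of_line {n : ℕ} (a : Fin n) {f : EuclideanSpace ℝ (Fin n) → ℝ}
    (hf : ContDiff ℝ (⊤ : ℕ∞) f)
    (h : ∀ x (τ : ℝ), f (x + τ • EuclideanSpace.single a 1) = f x) : pdv a f = 0 := by
  funext x
  have h₁ := hasDerivAt_line_pdv a hf x 0
  simp only [h] at h₁
  simpa using h₁.unique (hasDerivAt_const 0 (f x))

theorem line_of_pdv_eq_zero {n : ℕ} (a : Fin n) {f : EuclideanSpace ℝ (Fin n) → ℝ}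
    (hf : ContDiff ℝ (⊤ : ℕ∞) f) (h : pdv a f = 0)
    (x : EuclideanSpace ℝ (Fin n)) (τ : ℝ) :
    f (x + τ • EuclideanSpace.single a 1) = f x := by
  have hd : ∀ τ, HasDerivAt (fun τ : ℝ => f (x + τ • EuclideanSpace.single a 1)) 0 τ := by
    intro τ
    simpa [h] using hasDerivAt_line_pdv a hf x τ
  simpa using is_const_of_deriv_eq_zero (fun τ => (hd τ).differentiableAt)
    (fun τ => (hd τ).deriv) τ 0

/-- The primitive of `f` in the `a`-th coordinate that vanishes on the hyperplane `x a = 0`. -/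
noncomputable def coordPrimitive {n : ℕ} (a : Fin n) (f : EuclideanSpace ℝ (Fin n) → ℝ)
    (x : EuclideanSpace ℝ (Fin n)) : ℝ :=
  x a * ∫ s in (0 : ℝ)..1, f (x + ((s - 1) * x a) • EuclideanSpace.single a 1)

theorem contDiff_coordPrimitive {n : ℕ} (a : Fin n) {f : EuclideanSpace ℝ (Fin n) → ℝ}
    (hf : ContDiff ℝ (⊤ : ℕ∞) f) : ContDiff ℝ (⊤ : ℕ∞) (coordPrimitive a f) := by
  have hcoord : ContDiff ℝ (⊤ : ℕ∞) fun x : EuclideanSpace ℝ (Fin n) => x a :=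
    contDiff_euclidean.1 contDiff_id a
  refine hcoord.mul (contDiff_integral_of_contDiff
    (g := fun p : EuclideanSpace ℝ (Fin n) × ℝ =>
      f (p.1 + ((p.2 - 1) * p.1 a) • EuclideanSpace.single a 1)) (hf.comp ?_))
  exact contDiff_fst.add
    (((contDiff_snd.sub contDiff_const).mul (hcoord.comp contDiff_fst)).smul contDiff_const)

theorem coordPrimitive_line {n : ℕ} (a : Fin n) (f : EuclideanSpace ℝ (Fin n) → ℝ)
    (x : EuclideanSpace ℝ (Fin n)) (τ : ℝ) :
    coordPrimitive a f (x + τ • EuclideanSpace.single a 1) =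
      ∫ σ in (0 : ℝ)..(x a + τ), f (x + (σ - x a) • EuclideanSpace.single a 1) := by
  have h := intervalIntegral.mul_integral_comp_mul_left (a := 0) (b := 1)
    (f := fun σ : ℝ => f (x + (σ - x a) • EuclideanSpace.single a 1)) (x a + τ)
  simp only [mul_zero, mul_one] at h
  rw [← h, coordPrimitive]
  have hc : (x + τ • EuclideanSpace.single a (1 : ℝ)) a = x a + τ := by simp
  rw [hc]
  congr 1
  refine intervalIntegral.integral_congr fun s _ => ?_
  simp only [add_assoc, ← add_smul]
  congr 3
  ring

theorem pdv_coordPrimitive {n : ℕ} (a : Fin n) {f : EuclideanSpace ℝ (Fin n) → ℝ}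
    (hf : ContDiff ℝ (⊤ : ℕ∞) f) : pdv a (coordPrimitive a f) = f := by
  funext x
  have h₁ := hasDerivAt_line_pdv a (contDiff_coordPrimitive a hf) x 0
  simp only [coordPrimitive_line, zero_smul, add_zero] at h₁
  have hcont : Continuous fun σ : ℝ => f (x + (σ - x a) • EuclideanSpace.single a 1) :=
    hf.continuous.comp (by fun_prop)
  have h₂ : HasDerivAt (fun τ : ℝ =>
      ∫ σ in (0 : ℝ)..(x a + τ), f (x + (σ - x a) • EuclideanSpace.single a 1))
      (f (x + ((x a + 0) - x a) • EuclideanSpace.single a 1)) 0 :=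
    HasDerivAt.comp_const_add (x a) 0 (hcont.integral_hasStrictDerivAt 0 (x a + 0)).hasDerivAt
  simpa using h₁.unique h₂

theorem pdv_coordPrimitive_eq_zero {n : ℕ} {a b : Fin n} (hab : a ≠ b)
    {f : EuclideanSpace ℝ (Fin n) → ℝ} (hf : ContDiff ℝ (⊤ : ℕ∞) f) (h : pdv b f = 0) :
    pdv b (coordPrimitive a f) = 0 := by
  refine pdv_eq_zero_of_line b (contDiff_coordPrimitive a hf) fun x τ => ?_
  have hc : (x + τ • EuclideanSpace.single b (1 : ℝ)) a = x a := by simp [hab]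
  simp only [coordPrimitive, hc, add_right_comm x (τ • EuclideanSpace.single b (1 : ℝ)),
    line_of_pdv_eq_zero b hf h]

/-- The space of smooth real functions on `ℝ^n`. -/
def smoothFun (n : ℕ) : Submodule ℝ (EuclideanSpace ℝ (Fin n) → ℝ) where
  carrier := {f | ContDiff ℝ (⊤ : ℕ∞) f}
  add_mem' hf hg := Set.mem_ofPred.2 ((Set.mem_ofPred.1 hf).add (Set.mem_ofPred.1 hg))
  zero_mem' := Set.mem_ofPred.2 contDiff_const
  smul_mem' c _ hf := Set.mem_ofPred.2 ((Set.mem_ofPred.1 hf).const_smul c)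

theorem smoothFun_contDiff {n : ℕ} (f : smoothFun n) : ContDiff ℝ (⊤ : ℕ∞) f.1 := f.2

/-- The partial derivative as a linear endomorphism of the space of smooth functions. -/
noncomputable def smoothPdv {n : ℕ} (a : Fin n) : smoothFun n →ₗ[ℝ] smoothFun n where
  toFun f := ⟨pdv a f.1, contDiff_pdv a f.2⟩
  map_add' f g := by
    refine Subtype.ext (funext fun x => ?_)
    have hf := ((smoothFun_contDiff f).differentiable (by simp)) x
    have hg := ((smoothFun_contDiff g).differentiable (by simp)) x
    change fderiv ℝ (f.1 + g.1) x _ = _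
    rw [fderiv_add hf hg]
    rfl
  map_smul' c f := by
    refine Subtype.ext (funext fun x => ?_)
    have hf := ((smoothFun_contDiff f).differentiable (by simp)) x
    change fderiv ℝ (c • f.1) x _ = _
    rw [fderiv_const_smul hf]
    rfl

theorem smoothPdv_comm {n : ℕ} (a b : Fin n) (f : smoothFun n) :
    smoothPdv a (smoothPdv b f) = smoothPdv b (smoothPdv a f) :=
  Subtype.ext (pdv_comm a b f.2)

theorem exists_smoothPdv_eq {n : ℕ} (a : Fin n) (f : smoothFun n) :
    ∃ g : smoothFun n, smoothPdv a g = f ∧ ∀ b, a ≠ b → smoothPdv b f = 0 → smoothPdv b g = 0 :=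
  ⟨⟨coordPrimitive a f.1, contDiff_coordPrimitive a f.2⟩,
    Subtype.ext (pdv_coordPrimitive a f.2), fun _ hab h =>
      Subtype.ext (pdv_coordPrimitive_eq_zero hab f.2 (congrArg Subtype.val h))⟩

theorem smoothFun_sum_apply {n : ℕ} {ι : Type*} (t : Finset ι) (f : ι → smoothFun n)
    (x : EuclideanSpace ℝ (Fin n)) : (∑ i ∈ t, f i).1 x = ∑ i ∈ t, (f i).1 x := by
  simp [Finset.sum_apply]

theorem sum_smoothPdv_diag {d : ℕ} (j : Fin d) (f : smoothFun (d + 1)) :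
    ∑ i : Fin d, smoothPdv i.castSucc ((if j = i then (1 : ℝ) else 0) • f) =
      smoothPdv j.castSucc f := by
  simp_rw [map_smul]
  simp

theorem eulerLin_iff {d : ℕ} (ρ : smoothFun (d + 1)) (m : Fin d → smoothFun (d + 1))
    (M : Fin d → Fin d → smoothFun (d + 1)) (q : smoothFun (d + 1)) :
    EulerLin ρ.1 (fun x j => (m j).1 x) (fun x i j => (M i j).1 x) q.1 ↔
      (∀ j, smoothPdv (Fin.last d) (m j) + ∑ i : Fin d, smoothPdv i.castSucc (M j i) +
        smoothPdv j.castSucc q = 0) ∧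
      smoothPdv (Fin.last d) ρ + ∑ i : Fin d, smoothPdv i.castSucc (m i) = 0 := by
  simp only [EulerLin, Subtype.ext_iff, funext_iff, Submodule.coe_add, Pi.add_apply,
    smoothFun_sum_apply]
  exact and_congr_left' forall_comm

/-- `applyOp2` on smooth potentials, as a linear map in the coefficients. -/
noncomputable def smoothOp2 {n Nt : ℕ} (Ψ : Fin Nt → smoothFun n) :
    (Fin n → Fin n → Fin Nt → ℝ) →ₗ[ℝ] smoothFun n where
  toFun C := ∑ a : Fin n, ∑ b : Fin n, ∑ s : Fin Nt,
    C a b s • smoothPdv b (smoothPdv a (Ψ s))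
  map_add' C C' := by simp [add_smul, Finset.sum_add_distrib]
  map_smul' c C := by simp [mul_smul, Finset.smul_sum]

theorem applyOp2_eq_smoothOp2 {n Nt : ℕ} (C : Fin n → Fin n → Fin Nt → ℝ)
    (Ψ : Fin Nt → smoothFun n) (x : EuclideanSpace ℝ (Fin n)) :
    applyOp2 C (fun y s => (Ψ s).1 y) x = (smoothOp2 Ψ C).1 x := by
  change _ = (∑ a : Fin n, ∑ b : Fin n, ∑ s : Fin Nt,
    C a b s • smoothPdv b (smoothPdv a (Ψ s))).1 x
  simp only [smoothFun_sum_apply]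
  rfl

/-- The coefficients of the operator `ψ ↦ ∂_b ∂_a ψ_s`. -/
def op2Single {n Nt : ℕ} (a b : Fin n) (s : Fin Nt) : Fin n → Fin n → Fin Nt → ℝ :=
  Pi.single a (Pi.single b (Pi.single s 1))

theorem smoothOp2_single {n Nt : ℕ} (Ψ : Fin Nt → smoothFun n) (a b : Fin n) (s : Fin Nt) :
    smoothOp2 Ψ (op2Single a b s) = smoothPdv b (smoothPdv a (Ψ s)) := by
  change ∑ a' : Fin n, ∑ b' : Fin n, ∑ s' : Fin Nt,
    op2Single a b s a' b' s' • smoothPdv b' (smoothPdv a' (Ψ s')) = _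
  rw [Finset.sum_eq_single a, Finset.sum_eq_single b, Finset.sum_eq_single s]
  all_goals simp +contextual [op2Single]

section Potential

variable {d Nt : ℕ} (e : Fin d × Fin d → Fin Nt)

/-- The coefficients of `ψ ↦ ∂_b ∂_a S_{ij}`, where `S` is the symmetric part of the matrix
field with entries `ψ_{e (i, j)}`. -/
noncomputable def coefSymm (a b : Fin (d + 1)) (i j : Fin d) :
    Fin (d + 1) → Fin (d + 1) → Fin Nt → ℝ :=
  (1 / 2 : ℝ) • (op2Single a b (e (i, j)) + op2Single a b (e (j, i)))

/-- The coefficients of `ρ = ∑_{ij} ∂_j ∂_i S_{ij}`. -/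
noncomputable def coefDensity : Fin (d + 1) → Fin (d + 1) → Fin Nt → ℝ :=
  ∑ i : Fin d, ∑ j : Fin d, coefSymm e j.castSucc i.castSucc i j

/-- The coefficients of `m_i = -∑_j ∂_t ∂_j S_{ij}`. -/
noncomputable def coefMomentum (i : Fin d) : Fin (d + 1) → Fin (d + 1) → Fin Nt → ℝ :=
  -∑ j : Fin d, coefSymm e j.castSucc (Fin.last d) i j

/-- The coefficients of `q = (1 / d) ∂_t ∂_t tr S`. -/
noncomputable def coefPressure : Fin (d + 1) → Fin (d + 1) → Fin Nt → ℝ :=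
  (d : ℝ)⁻¹ • ∑ k : Fin d, coefSymm e (Fin.last d) (Fin.last d) k k

/-- The coefficients of `M_{ij} = ∂_t ∂_t S_{ij} - q δ_{ij}`. -/
noncomputable def coefStress (i j : Fin d) : Fin (d + 1) → Fin (d + 1) → Fin Nt → ℝ :=
  coefSymm e (Fin.last d) (Fin.last d) i j - (if i = j then (1 : ℝ) else 0) • coefPressure e

/-- The symmetric matrix potential encoded by `Ψ`. -/
noncomputable def symmPotential (Ψ : Fin Nt → smoothFun (d + 1)) (i j : Fin d) :
    smoothFun (d + 1) :=
  (1 / 2 : ℝ) • (Ψ (e (i, j)) + Ψ (e (j, i)))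

variable (Ψ : Fin Nt → smoothFun (d + 1))

theorem symmPotential_symm (i j : Fin d) : symmPotential e Ψ i j = symmPotential e Ψ j i := by
  simp only [symmPotential, add_comm]

theorem smoothOp2_coefSymm (a b : Fin (d + 1)) (i j : Fin d) :
    smoothOp2 Ψ (coefSymm e a b i j) = smoothPdv b (smoothPdv a (symmPotential e Ψ i j)) := by
  simp [coefSymm, symmPotential, smoothOp2_single]

theorem smoothOp2_coefDensity :
    smoothOp2 Ψ (coefDensity e) = ∑ i : Fin d, ∑ j : Fin d,
      smoothPdv i.castSucc (smoothPdv j.castSucc (symmPotential e Ψ i j)) := by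
  simp [coefDensity, smoothOp2_coefSymm]

theorem smoothOp2_coefMomentum (i : Fin d) :
    smoothOp2 Ψ (coefMomentum e i) = -∑ j : Fin d,
      smoothPdv (Fin.last d) (smoothPdv j.castSucc (symmPotential e Ψ i j)) := by
  simp [coefMomentum, smoothOp2_coefSymm]

theorem smoothOp2_coefPressure :
    smoothOp2 Ψ (coefPressure e) = (d : ℝ)⁻¹ • ∑ k : Fin d,
      smoothPdv (Fin.last d) (smoothPdv (Fin.last d) (symmPotential e Ψ k k)) := by
  simp [coefPressure, smoothOp2_coefSymm]

theorem smoothOp2_coefStress (i j : Fin d) :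
    smoothOp2 Ψ (coefStress e i j) =
      smoothPdv (Fin.last d) (smoothPdv (Fin.last d) (symmPotential e Ψ i j)) -
        (if i = j then (1 : ℝ) else 0) • smoothOp2 Ψ (coefPressure e) := by
  simp only [coefStress, map_sub, map_smul, smoothOp2_coefSymm]

theorem smoothOp2_coefStress_symm (i j : Fin d) :
    smoothOp2 Ψ (coefStress e i j) = smoothOp2 Ψ (coefStress e j i) := by
  rw [smoothOp2_coefStress, smoothOp2_coefStress, symmPotential_symm]
  simp only [eq_comm]

theorem sum_smoothOp2_coefStress (hd : d ≠ 0) :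
    ∑ i : Fin d, smoothOp2 Ψ (coefStress e i i) = 0 := by
  have hd' : (d : ℝ) ≠ 0 := Nat.cast_ne_zero.2 hd
  simp only [smoothOp2_coefStress, if_true, one_smul, Finset.sum_sub_distrib, Finset.sum_const,
    Finset.card_univ, Fintype.card_fin]
  rw [← Nat.cast_smul_eq_nsmul ℝ, smoothOp2_coefPressure, smul_smul, mul_inv_cancel₀ hd', one_smul,
    sub_self]

theorem momentum_balance_smoothOp2 (j : Fin d) :
    smoothPdv (Fin.last d) (smoothOp2 Ψ (coefMomentum e j)) +
      ∑ i : Fin d, smoothPdv i.castSucc (smoothOp2 Ψ (coefStress e j i)) +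
        smoothPdv j.castSucc (smoothOp2 Ψ (coefPressure e)) = 0 := by
  simp only [smoothOp2_coefStress, map_sub, Finset.sum_sub_distrib, sum_smoothPdv_diag,
    smoothOp2_coefMomentum, map_neg, map_sum, smoothPdv_comm (Fin.castSucc _) (Fin.last d)]
  abel

theorem mass_balance_smoothOp2 :
    smoothPdv (Fin.last d) (smoothOp2 Ψ (coefDensity e)) +
      ∑ i : Fin d, smoothPdv i.castSucc (smoothOp2 Ψ (coefMomentum e i)) = 0 := by
  simp only [smoothOp2_coefDensity, smoothOp2_coefMomentum, map_neg, map_sum,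
    smoothPdv_comm (Fin.castSucc _) (Fin.last d), Finset.sum_neg_distrib]
  abel

end Potential

/-- A symmetric divergence-free matrix field on `ℝ^{d+1}`, with blocks `U`, `m`, `ρ`, is given by a
symmetric `d × d` matrix of second-order potentials. -/
theorem exists_symm_potential {d : ℕ} (i₀ : Fin d) (ρ : smoothFun (d + 1))
    (m : Fin d → smoothFun (d + 1)) (U : Fin d → Fin d → smoothFun (d + 1))
    (hU : ∀ i j, U i j = U j i)
    (hm : ∀ j, smoothPdv (Fin.last d) (m j) + ∑ i : Fin d, smoothPdv i.castSucc (U j i) = 0)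
    (hρ : smoothPdv (Fin.last d) ρ + ∑ i : Fin d, smoothPdv i.castSucc (m i) = 0) :
    ∃ S : Fin d → Fin d → smoothFun (d + 1), (∀ i j, S i j = S j i) ∧
      (∀ i j, U i j = smoothPdv (Fin.last d) (smoothPdv (Fin.last d) (S i j))) ∧
      (∀ i, m i = -∑ j : Fin d, smoothPdv (Fin.last d) (smoothPdv j.castSucc (S i j))) ∧
      ρ = ∑ i : Fin d, ∑ j : Fin d, smoothPdv i.castSucc (smoothPdv j.castSucc (S i j)) := by
  choose P hP hP₀ using fun a : Fin (d + 1) => exists_smoothPdv_eq a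
  have hne : ∀ i : Fin d, i.castSucc ≠ Fin.last d := Fin.castSucc_ne_last
  set t := Fin.last d with ht
  have hct : ∀ (i : Fin d) f, smoothPdv t (smoothPdv i.castSucc f) =
      smoothPdv i.castSucc (smoothPdv t f) := fun i f => smoothPdv_comm _ _ f
  -- `V` has the right block `U`; `A` corrects `m`, and `B` corrects `ρ`.
  let V : Fin d → Fin d → smoothFun (d + 1) := fun i j => P t (P t (U i j))
  let g : Fin d → smoothFun (d + 1) := fun i =>
    m i + ∑ j : Fin d, smoothPdv t (smoothPdv j.castSucc (V i j))
  have hg : ∀ i, smoothPdv t (g i) = 0 := by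
    intro i
    simp only [g, V, map_add, map_sum, hct, hP]
    exact hm i
  let A : Fin d → smoothFun (d + 1) := fun i => P t (P i.castSucc (g i))
  have hA : ∀ i, smoothPdv t (smoothPdv t (A i)) = 0 := by
    intro i
    simp only [A, hP]
    exact hP₀ _ _ _ (hne i) (hg i)
  let W : Fin d → Fin d → smoothFun (d + 1) := fun i j => V i j - if i = j then A i else 0
  have hW : ∀ i, m i = -∑ j : Fin d, smoothPdv t (smoothPdv j.castSucc (W i j)) := by
    intro i
    have h : ∑ j : Fin d, smoothPdv t (smoothPdv j.castSucc (if i = j then A i else 0)) = g i := by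
      rw [Finset.sum_eq_single i]
      · simp only [if_true, hct, A, hP]
      · intro j _ hj
        simp [hj.symm]
      · simp
    simp only [W, map_sub, Finset.sum_sub_distrib, h]
    simp only [g]
    abel
  let h : smoothFun (d + 1) :=
    ρ - ∑ i : Fin d, ∑ j : Fin d, smoothPdv i.castSucc (smoothPdv j.castSucc (W i j))
  have hh : smoothPdv t h = 0 := by
    rw [← hρ]
    simp only [h, map_sub, map_sum, hW, map_neg, hct]
    simp [sub_eq_add_neg]
  let B : smoothFun (d + 1) := P i₀.castSucc (P i₀.castSucc h)
  have hB : smoothPdv t B = 0 := hP₀ _ _ _ (hne i₀) (hP₀ _ _ _ (hne i₀) hh)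
  refine ⟨fun i j => W i j + if i = i₀ ∧ j = i₀ then B else 0, ?_, ?_, ?_, ?_⟩
  · intro i j
    have h₁ : (i = i₀ ∧ j = i₀) ↔ (j = i₀ ∧ i = i₀) := and_comm
    by_cases hij : i = j
    · rw [hij]
    · simp only [W, V, hU i j, hij, Ne.symm hij, if_false, h₁]
  · intro i j
    have h₁ : smoothPdv t (if i = i₀ ∧ j = i₀ then B else 0) = 0 := by
      split_ifs
      · exact hB
      · exact map_zero _
    have h₂ : smoothPdv t (smoothPdv t (if i = j then A i else 0)) = 0 := by
      split_ifs
      · exact hA i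
      · simp
    simp only [map_add, h₁, W, V, map_sub, h₂, hP, add_zero, sub_zero]
  · intro i
    have h₁ : ∀ j, smoothPdv t (if i = i₀ ∧ j = i₀ then B else 0) = 0 := by
      intro j
      split_ifs
      · exact hB
      · exact map_zero _
    rw [hW i]
    simp only [map_add, hct, h₁, map_zero, add_zero]
  · have h₁ : ∑ i : Fin d, ∑ j : Fin d, smoothPdv i.castSucc
        (smoothPdv j.castSucc (if i = i₀ ∧ j = i₀ then B else 0)) = h := by
      rw [Finset.sum_eq_single i₀, Finset.sum_eq_single i₀]
      · simp only [and_self, if_true, B, hP]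
      · intro j _ hj
        simp [hj]
      · simp
      · intro i _ hi
        simp [hi]
      · simp
    simp only [map_add, Finset.sum_add_distrib, h₁]
    simp only [h]
    abel

theorem sq_le_potential_count {d : ℕ} (hd : 3 ≤ d) : d * d ≤ (d * (d - 1) / 2) ^ 2 := by
  have h : d ≤ d * (d - 1) / 2 := by
    rw [Nat.le_div_iff_mul_le two_pos]
    exact Nat.mul_le_mul_left d (by omega)
  rw [sq]
  exact Nat.mul_le_mul h h

/-- for `d ≥ 3` the linearized isentropic Euler operator `𝓐` on
`ℝ^{d+1}` has a second-order homogeneous constant-coefficient potential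
`𝓑 : C^∞(ℝ^{d+1}, ℝ^{Ñ}) → C^∞(ℝ^{d+1}, ℝ × ℝ^d × S_0^d × ℝ)`, `Ñ = ((d-1)d/2)²`,
with `ker 𝓐 = im 𝓑` on smooth functions. -/
theorem linearized_euler_has_second_order_potential
    (d : ℕ) (hd : 3 ≤ d) :
    ∃ (Cρ : Fin (d + 1) → Fin (d + 1) → Fin ((d * (d - 1) / 2) ^ 2) → ℝ)
      (Cm : Fin (d + 1) → Fin (d + 1) → Fin d → Fin ((d * (d - 1) / 2) ^ 2) → ℝ)
      (CM : Fin (d + 1) → Fin (d + 1) → Fin d → Fin d → Fin ((d * (d - 1) / 2) ^ 2) → ℝ)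
      (Cq : Fin (d + 1) → Fin (d + 1) → Fin ((d * (d - 1) / 2) ^ 2) → ℝ),
      -- the image of 𝓑 consists of smooth solutions of 𝓐z = 0 taking values in
      -- ℝ × ℝ^d × S_0^d × ℝ
      (∀ ψ : EuclideanSpace ℝ (Fin (d + 1)) → Fin ((d * (d - 1) / 2) ^ 2) → ℝ,
        ContDiff ℝ (⊤ : ℕ∞) ψ →
          (∀ x i j, applyOp2 (fun a b s => CM a b i j s) ψ x =
            applyOp2 (fun a b s => CM a b j i s) ψ x) ∧
          (∀ x, ∑ i : Fin d, applyOp2 (fun a b s => CM a b i i s) ψ x = 0) ∧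
          EulerLin (fun x => applyOp2 Cρ ψ x)
            (fun x j => applyOp2 (fun a b s => Cm a b j s) ψ x)
            (fun x i j => applyOp2 (fun a b s => CM a b i j s) ψ x)
            (fun x => applyOp2 Cq ψ x)) ∧
      -- every smooth solution of 𝓐z = 0 lies in the image of 𝓑
      (∀ (ρ : EuclideanSpace ℝ (Fin (d + 1)) → ℝ)
        (m : EuclideanSpace ℝ (Fin (d + 1)) → Fin d → ℝ)
        (M : EuclideanSpace ℝ (Fin (d + 1)) → Fin d → Fin d → ℝ)
        (q : EuclideanSpace ℝ (Fin (d + 1)) → ℝ),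
        ContDiff ℝ (⊤ : ℕ∞) ρ → ContDiff ℝ (⊤ : ℕ∞) m → ContDiff ℝ (⊤ : ℕ∞) M → ContDiff ℝ (⊤ : ℕ∞) q →
        (∀ x i j, M x i j = M x j i) → (∀ x, ∑ i : Fin d, M x i i = 0) →
        EulerLin ρ m M q →
        ∃ ψ : EuclideanSpace ℝ (Fin (d + 1)) → Fin ((d * (d - 1) / 2) ^ 2) → ℝ,
          ContDiff ℝ (⊤ : ℕ∞) ψ ∧
          (∀ x, ρ x = applyOp2 Cρ ψ x) ∧
          (∀ x j, m x j = applyOp2 (fun a b s => Cm a b j s) ψ x) ∧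
          (∀ x i j, M x i j = applyOp2 (fun a b s => CM a b i j s) ψ x) ∧
          (∀ x, q x = applyOp2 Cq ψ x)) := by
  have hcard : Fintype.card (Fin d × Fin d) ≤ Fintype.card (Fin ((d * (d - 1) / 2) ^ 2)) := by
    simpa using sq_le_potential_count hd
  obtain ⟨e⟩ := Function.Embedding.nonempty_of_card_le hcard
  have i₀ : Fin d := ⟨0, by omega⟩
  have : Nonempty (Fin d × Fin d) := ⟨(i₀, i₀)⟩
  refine ⟨coefDensity e, fun a b j s => coefMomentum e j a b s,
    fun a b i j s => coefStress e i j a b s, coefPressure e, ?_, ?_⟩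
  · intro ψ hψ
    let Ψ : Fin ((d * (d - 1) / 2) ^ 2) → smoothFun (d + 1) :=
      fun s => ⟨fun x => ψ x s, contDiff_pi.1 hψ s⟩
    have hop : ∀ C x, applyOp2 C ψ x = (smoothOp2 Ψ C).1 x := fun C x =>
      applyOp2_eq_smoothOp2 C Ψ x
    simp only [hop]
    refine ⟨fun x i j => ?_, fun x => ?_, ?_⟩
    · exact congrArg (fun f => f.1 x) (smoothOp2_coefStress_symm e Ψ i j)
    · rw [← smoothFun_sum_apply, sum_smoothOp2_coefStress e Ψ (by omega)]
      rfl
    · exact (eulerLin_iff _ _ _ _).2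
        ⟨momentum_balance_smoothOp2 e Ψ, mass_balance_smoothOp2 e Ψ⟩
  · intro ρ m M q hρ hm hM hq hsymm htr hE
    let ρ' : smoothFun (d + 1) := ⟨ρ, hρ⟩
    let m' : Fin d → smoothFun (d + 1) := fun j => ⟨fun x => m x j, contDiff_pi.1 hm j⟩
    let M' : Fin d → Fin d → smoothFun (d + 1) := fun i j =>
      ⟨fun x => M x i j, contDiff_pi.1 (contDiff_pi.1 hM i) j⟩
    let q' : smoothFun (d + 1) := ⟨q, hq⟩
    have hM'symm : ∀ i j, M' i j = M' j i := fun i j =>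
      Subtype.ext (funext fun x => hsymm x i j)
    have hM'tr : ∑ i, M' i i = 0 :=
      Subtype.ext (funext fun x => by rw [smoothFun_sum_apply]; exact htr x)
    obtain ⟨hmom, hmass⟩ := (eulerLin_iff ρ' m' M' q').1 hE
    obtain ⟨S, hS, hSU, hSm, hSρ⟩ := exists_symm_potential i₀ ρ' m'
      (fun i j => M' i j + (if i = j then (1 : ℝ) else 0) • q')
      (fun i j => by simp only [hM'symm i j, eq_comm])
      (fun j => by
        rw [← hmom j, add_assoc]
        simp only [map_add, Finset.sum_add_distrib, sum_smoothPdv_diag])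
      hmass
    let Ψ : Fin ((d * (d - 1) / 2) ^ 2) → smoothFun (d + 1) :=
      fun s => S (Function.invFun e s).1 (Function.invFun e s).2
    have hΨ : ∀ i j, symmPotential e Ψ i j = S i j := by
      intro i j
      simp only [symmPotential, Ψ, Function.leftInverse_invFun e.injective _, hS j i, ← two_smul ℝ]
      rw [smul_smul]
      norm_num
    have hq' : q' = smoothOp2 Ψ (coefPressure e) := by
      have hd' : (d : ℝ) ≠ 0 := Nat.cast_ne_zero.2 (by omega)
      simp only [smoothOp2_coefPressure, hΨ, ← hSU, if_true, one_smul, Finset.sum_add_distrib,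
        hM'tr, zero_add, Finset.sum_const, Finset.card_univ, Fintype.card_fin]
      rw [← Nat.cast_smul_eq_nsmul ℝ, smul_smul, inv_mul_cancel₀ hd', one_smul]
    refine ⟨fun x s => (Ψ s).1 x, contDiff_pi.2 fun s => smoothFun_contDiff (Ψ s), ?_, ?_, ?_, ?_⟩
    · intro x
      rw [applyOp2_eq_smoothOp2, smoothOp2_coefDensity]
      simp only [hΨ, ← hSρ]
      rfl
    · intro x j
      rw [applyOp2_eq_smoothOp2 (coefMomentum e j), smoothOp2_coefMomentum]
      simp only [hΨ, ← hSm]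
      rfl
    · intro x i j
      rw [applyOp2_eq_smoothOp2 (coefStress e i j), smoothOp2_coefStress, ← hq', hΨ, ← hSU,
        add_sub_cancel_right]
    · intro x
      rw [applyOp2_eq_smoothOp2, ← hq']
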